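/- For every k with 1 ≤ k ≤ K−1 and every fixed (w,b) ∈ (0,T)×[0,R̄], the optimum stopping set C_k(w,b) = { p ∈ P_k : −η b ≤ c_k(p,w,b) } is a convex subset of P_k. -/

import Mathlib

/-!
The continuing cost `c_k` is concave in the belief `p`, and `C_k(w,b)` is a superlevel set of it.

For concavity the value functions are replaced by positively homogeneous extensions `homVal` to the
cone of nonnegative vectors: instead of normalising the posterior `τ_{k+1}(p,w,u)`, the unnormalised
vector `n ↦ p n * g_{n-k}(u; T-w)` is propagated, and the stopping cost `-η b` is weighted with the
total mass of the vector. As the unnormalised posterior is *linear* in `p`, superadditivity of the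
next value function passes through the integral, and a minimum of two superadditive functions is
superadditive. A superadditive positively homogeneous function is concave. On vectors of mass one
the extension is the original value function (`Jaux_eq_homVal`), and `c_k` is the corresponding
homogeneous continuing cost on all nonnegative vectors (`contCost_eq_homCont`).

The integrals involved are genuine ones: the properties carried along the recursion (`Good`) include
joint measurability and a bound by a multiple of the mass, which make every integrand integrable.
-/


open MeasureTheory Set

/-- Density of the minimum of `m` iid Uniform[0,s] random variables. -/
noncomputable def gmin (m : ℕ) (s u : ℝ) : ℝ :=
  if 0 ≤ u ∧ u ≤ s then (m : ℝ) * (s - u) ^ (m - 1) / s ^ m else 0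

/-- Threshold functions `φ_ℓ` defined recursively. -/
noncomputable def phi (T Rbar η : ℝ) (fR : ℝ → ℝ) : ℕ → ℝ → ℝ → ℝ
  | 0 => fun _ _ => 0
  | ℓ + 1 => fun w b =>
      ∫ r in (0:ℝ)..Rbar, ∫ u in (0:ℝ)..(T - w),
        (max b (max r (phi T Rbar η fR ℓ (w + u) (max b r))) - u / η)
          * gmin (ℓ + 1) (T - w) u * fR r

/-- Membership in the probability simplex `P_k` (probability vectors on `{k,…,K}`). -/
def memP (K k : ℕ) (p : ℕ → ℝ) : Prop :=
  (∀ n, 0 ≤ p n) ∧ (∀ n, n < k ∨ K < n → p n = 0) ∧ ∑ n ∈ Finset.Icc k K, p n = 1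

/-- Belief state transition `τ_{k+1}(p,w,u)`. -/
noncomputable def τbel (T : ℝ) (K k : ℕ) (p : ℕ → ℝ) (w u : ℝ) : ℕ → ℝ :=
  fun n => p n * gmin (n - k) (T - w) u /
    ∑ ℓ ∈ Finset.Icc (k + 1) K, p ℓ * gmin (ℓ - k) (T - w) u

/-- Continuing cost at stage `k`, given the value function `Jnext` of stage `k+1`. -/
noncomputable def contCost (T Rbar η : ℝ) (fR : ℝ → ℝ) (K : ℕ)
    (Jnext : (ℕ → ℝ) → ℝ → ℝ → ℝ) (k : ℕ) (p : ℕ → ℝ) (w b : ℝ) : ℝ :=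
  p k * (T - w - η * b) +
    ∑ n ∈ Finset.Icc (k + 1) K, p n *
      ∫ r in (0:ℝ)..Rbar, ∫ u in (0:ℝ)..(T - w),
        (u + Jnext (τbel T K k p w u) (w + u) (max b r)) * gmin (n - k) (T - w) u * fR r

/-- Backward value recursion: `Jaux m` is the value function at stage `K - m`. -/
noncomputable def Jaux (T Rbar η : ℝ) (fR : ℝ → ℝ) (K : ℕ) : ℕ → (ℕ → ℝ) → ℝ → ℝ → ℝ
  | 0 => fun _ _ b => -η * b
  | m + 1 => fun p w b =>
      min (-η * b)
        (contCost T Rbar η fR K (Jaux T Rbar η fR K m) (K - (m + 1)) p w b)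

/-- The optimal cost-to-go function `J_k`. -/
noncomputable def Jval (T Rbar η : ℝ) (fR : ℝ → ℝ) (K k : ℕ) : (ℕ → ℝ) → ℝ → ℝ → ℝ :=
  Jaux T Rbar η fR K (K - k)

/-- The continuing cost `c_k`. -/
noncomputable def cCost (T Rbar η : ℝ) (fR : ℝ → ℝ) (K k : ℕ) : (ℕ → ℝ) → ℝ → ℝ → ℝ :=
  contCost T Rbar η fR K (Jaux T Rbar η fR K (K - (k + 1))) k

/-- Mass of a vector on the indices `K - m, …, K` that are possible at stage `K - m`. -/
noncomputable def mass (K m : ℕ) (q : ℕ → ℝ) : ℝ := ∑ n ∈ Finset.Icc (K - m) K, q n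

/-- Unnormalised posterior after stage `k`: the numerator of the belief transition. -/
noncomputable def push (T : ℝ) (k : ℕ) (q : ℕ → ℝ) (w u : ℝ) : ℕ → ℝ :=
  fun n => q n * gmin (n - k) (T - w) u

/-- Integrand of the homogeneous continuing cost at stage `K - (m + 1)`; the pair `z` is `(r, u)`. -/
noncomputable def homInt (T : ℝ) (fR : ℝ → ℝ) (K m : ℕ) (G : (ℕ → ℝ) → ℝ → ℝ → ℝ)
    (q : ℕ → ℝ) (w b : ℝ) (z : ℝ × ℝ) : ℝ :=
  (z.2 * mass K m (push T (K - (m + 1)) q w z.2)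
    + G (push T (K - (m + 1)) q w z.2) (w + z.2) (max b z.1)) * fR z.1

/-- Positively homogeneous continuing cost at stage `K - (m + 1)`, where `G` is the homogeneous
value function of the next stage. -/
noncomputable def homCont (T η : ℝ) (fR : ℝ → ℝ) (K m : ℕ) (G : (ℕ → ℝ) → ℝ → ℝ → ℝ)
    (q : ℕ → ℝ) (w b : ℝ) : ℝ :=
  q (K - (m + 1)) * (T - w - η * b) + ∫ z : ℝ × ℝ, homInt T fR K m G q w b z

/-- Positively homogeneous extension of the value function `Jaux m`. -/
noncomputable def homVal (T η : ℝ) (fR : ℝ → ℝ) (K : ℕ) : ℕ → (ℕ → ℝ) → ℝ → ℝ → ℝ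
  | 0 => fun q _ b => -η * b * mass K 0 q
  | m + 1 => fun q w b =>
      min (-η * b * mass K (m + 1) q) (homCont T η fR K m (homVal T η fR K m) q w b)

/-- The properties of a homogeneous cost function that are preserved by the recursion. -/
structure Good (T Rbar : ℝ) (K m : ℕ) (G : (ℕ → ℝ) → ℝ → ℝ → ℝ) : Prop where
  meas : Measurable fun x : (ℕ → ℝ) × ℝ × ℝ => G x.1 x.2.1 x.2.2
  homog : ∀ (a : ℝ), 0 ≤ a → ∀ q w b, G (fun n => a * q n) w b = a * G q w b
  bound : ∃ B, 0 ≤ B ∧ ∀ q, (∀ n, 0 ≤ q n) → ∀ w ∈ Icc 0 T, ∀ b ∈ Icc 0 Rbar,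
    |G q w b| ≤ B * mass K m q
  superadd : ∀ p q, (∀ n, 0 ≤ p n) → (∀ n, 0 ≤ q n) → ∀ w ∈ Icc 0 T, ∀ b ∈ Icc 0 Rbar,
    G p w b + G q w b ≤ G (fun n => p n + q n) w b

/-- The assumptions on the reward density, in the form used by the integral estimates. -/
structure Dens (Rbar : ℝ) (fR : ℝ → ℝ) : Prop where
  nonneg : ∀ r, 0 ≤ fR r
  supp : ∀ r, r < 0 ∨ Rbar < r → fR r = 0
  meas : Measurable fR
  int : Integrable fR
  tot : ∫ r, fR r = 1

/-! ### The densities -/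

lemma gmin_nonneg (m : ℕ) (s u : ℝ) : 0 ≤ gmin m s u := by
  unfold gmin
  split_ifs with h
  · have h1 : 0 ≤ s - u := by linarith [h.2]
    have h2 : 0 ≤ s := by linarith [h.1, h.2]
    positivity
  · exact le_rfl

lemma gmin_zero (s u : ℝ) : gmin 0 s u = 0 := by simp [gmin]

lemma gmin_off {m : ℕ} {s u : ℝ} (h : ¬ (0 ≤ u ∧ u ≤ s)) : gmin m s u = 0 := by
  simp [gmin, h]

lemma gmin_meas (m : ℕ) : Measurable fun x : ℝ × ℝ => gmin m x.1 x.2 := by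
  unfold gmin
  refine Measurable.ite ?_ ?_ measurable_const
  · exact (measurableSet_le measurable_const measurable_snd).inter
      (measurableSet_le measurable_snd measurable_fst)
  · fun_prop

lemma gmin_eq_indicator (m : ℕ) (s : ℝ) :
    gmin m s = (Icc 0 s).indicator (fun u => (m : ℝ) * (s - u) ^ (m - 1) / s ^ m) := by
  ext u
  simp [gmin, indicator]

lemma gmin_integrable (m : ℕ) (s : ℝ) : Integrable (gmin m s) := by
  rw [gmin_eq_indicator, integrable_indicator_iff measurableSet_Icc]
  exact (Continuous.continuousOn (by fun_prop)).integrableOn_compact isCompact_Icc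

lemma gmin_integral_le (m : ℕ) (s : ℝ) (hs : 0 ≤ s) : ∫ u, gmin m s u ≤ 1 := by
  rcases m with _ | m
  · simp [gmin_zero]
  rw [gmin_eq_indicator, integral_indicator measurableSet_Icc, integral_Icc_eq_integral_Ioc,
    ← intervalIntegral.integral_of_le hs]
  have h := intervalIntegral.integral_comp_sub_left (a := 0) (b := s) (fun x : ℝ => x ^ m) s
  simp only [Nat.add_sub_cancel]
  rw [intervalIntegral.integral_div, intervalIntegral.integral_const_mul, h]
  simp only [sub_self, sub_zero, integral_pow]
  have hm : ((m + 1 : ℕ) : ℝ) * ((s ^ (m + 1) - 0 ^ (m + 1)) / ((m : ℝ) + 1)) = s ^ (m + 1) := by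
    push_cast
    field_simp
    simp
  rw [hm]
  exact div_self_le_one _

lemma interval_eq_full {h : ℝ → ℝ} {s : ℝ} (hs : 0 ≤ s) (hh : ∀ u, ¬ (0 ≤ u ∧ u ≤ s) → h u = 0) :
    ∫ u in (0 : ℝ)..s, h u = ∫ u, h u := by
  rw [intervalIntegral.integral_of_le hs, ← integral_Icc_eq_integral_Ioc]
  exact setIntegral_eq_integral_of_forall_compl_eq_zero fun u hu => hh u hu

lemma dens_of {Rbar : ℝ} {fR : ℝ → ℝ} (hRbar : 0 < Rbar) (h0 : ∀ r, 0 ≤ fR r)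
    (hsupp : ∀ r, r < 0 ∨ Rbar < r → fR r = 0) (hm : Measurable fR)
    (hint : ∫ r in (0:ℝ)..Rbar, fR r = 1) : Dens Rbar fR := by
  have hoff : ∀ r, ¬ (0 ≤ r ∧ r ≤ Rbar) → fR r = 0 := fun r hr => hsupp r (by
    by_contra! hc
    exact hr hc)
  have ht : ∫ r, fR r = 1 := by rw [← interval_eq_full hRbar.le hoff, hint]
  refine ⟨h0, hsupp, hm, ?_, ht⟩
  -- A non-integrable function would have integral `0`.
  by_contra hc
  rw [integral_undef hc] at ht
  exact zero_ne_one ht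

/-! ### Mass and unnormalised posterior -/

lemma mass_nonneg {K m : ℕ} {q : ℕ → ℝ} (hq : ∀ n, 0 ≤ q n) : 0 ≤ mass K m q :=
  Finset.sum_nonneg fun n _ => hq n

lemma mass_add (K m : ℕ) (p q : ℕ → ℝ) :
    mass K m (fun n => p n + q n) = mass K m p + mass K m q := Finset.sum_add_distrib

lemma mass_smul (K m : ℕ) (a : ℝ) (q : ℕ → ℝ) :
    mass K m (fun n => a * q n) = a * mass K m q := (Finset.mul_sum _ _ _).symm

lemma mass_meas (K m : ℕ) : Measurable fun q : ℕ → ℝ => mass K m q := by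
  unfold mass
  exact Finset.measurable_sum _ fun n _ => measurable_pi_apply n

lemma mass_le_succ {K m : ℕ} {q : ℕ → ℝ} (hq : ∀ n, 0 ≤ q n) : mass K m q ≤ mass K (m + 1) q :=
  Finset.sum_le_sum_of_subset_of_nonneg
    (Finset.Icc_subset_Icc_left (by omega)) fun n _ _ => hq n

lemma apply_le_mass {K m : ℕ} {q : ℕ → ℝ} (hq : ∀ n, 0 ≤ q n) : q (K - m) ≤ mass K m q :=
  Finset.single_le_sum (f := q) (fun n _ => hq n) (by simp)

lemma push_nonneg {T : ℝ} {k : ℕ} {q : ℕ → ℝ} (hq : ∀ n, 0 ≤ q n) (w u : ℝ) (n : ℕ) :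
    0 ≤ push T k q w u n := mul_nonneg (hq n) (gmin_nonneg _ _ _)

lemma push_add (T : ℝ) (k : ℕ) (p q : ℕ → ℝ) (w u : ℝ) :
    push T k (fun n => p n + q n) w u = fun n => push T k p w u n + push T k q w u n := by
  ext n
  simp only [push]
  ring

lemma push_smul (T : ℝ) (k : ℕ) (a : ℝ) (q : ℕ → ℝ) (w u : ℝ) :
    push T k (fun n => a * q n) w u = fun n => a * push T k q w u n := by
  ext n
  simp only [push]
  ring

lemma push_off {T : ℝ} {k : ℕ} {q : ℕ → ℝ} {w u : ℝ} (h : ¬ (0 ≤ u ∧ u ≤ T - w)) :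
    push T k q w u = fun _ => 0 := by
  ext n
  simp [push, gmin_off h]

lemma push_meas (T : ℝ) (k : ℕ) :
    Measurable fun x : (ℕ → ℝ) × ℝ × ℝ => push T k x.1 x.2.1 x.2.2 := by
  refine measurable_pi_lambda _ fun n => ?_
  refine Measurable.mul (by fun_prop) ?_
  exact (gmin_meas (n - k)).comp
    (f := fun x : (ℕ → ℝ) × ℝ × ℝ => (T - x.2.1, x.2.2)) (by fun_prop)

lemma mass_push_integrable (T : ℝ) (K m k : ℕ) (q : ℕ → ℝ) (w : ℝ) :
    Integrable fun u => mass K m (push T k q w u) := by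
  unfold mass push
  exact integrable_finsetSum _ fun n _ => (gmin_integrable _ _).const_mul _

lemma mass_push_integral_le {T : ℝ} (K m k : ℕ) {q : ℕ → ℝ} (hq : ∀ n, 0 ≤ q n) {w : ℝ}
    (hw : w ≤ T) : ∫ u, mass K m (push T k q w u) ≤ mass K m q := by
  unfold mass push
  rw [integral_finsetSum _ fun n _ => (gmin_integrable _ _).const_mul _]
  refine Finset.sum_le_sum fun n _ => ?_
  rw [integral_const_mul]
  exact mul_le_of_le_one_right (hq n) (gmin_integral_le _ _ (by linarith))

lemma Good.zero {T Rbar : ℝ} {K m : ℕ} {G : (ℕ → ℝ) → ℝ → ℝ → ℝ} (hG : Good T Rbar K m G)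
    (w b : ℝ) : G (fun _ => 0) w b = 0 := by
  simpa using hG.homog 0 le_rfl (fun _ => 0) w b

/-! ### One step of the recursion -/

section Step

variable {T Rbar η : ℝ} {fR : ℝ → ℝ} {K m : ℕ} {G : (ℕ → ℝ) → ℝ → ℝ → ℝ}

lemma homInt_meas (hf : Dens Rbar fR) (hG : Good T Rbar K m G) :
    Measurable fun x : ((ℕ → ℝ) × ℝ × ℝ) × (ℝ × ℝ) =>
      homInt T fR K m G x.1.1 x.1.2.1 x.1.2.2 x.2 := by
  unfold homInt
  have hp : Measurable fun x : ((ℕ → ℝ) × ℝ × ℝ) × (ℝ × ℝ) =>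
      push T (K - (m + 1)) x.1.1 x.1.2.1 x.2.2 :=
    (push_meas T (K - (m + 1))).comp
      (f := fun x : ((ℕ → ℝ) × ℝ × ℝ) × (ℝ × ℝ) => (x.1.1, x.1.2.1, x.2.2)) (by fun_prop)
  have hg : Measurable fun x : ((ℕ → ℝ) × ℝ × ℝ) × (ℝ × ℝ) =>
      G (push T (K - (m + 1)) x.1.1 x.1.2.1 x.2.2) (x.1.2.1 + x.2.2) (max x.1.2.2 x.2.1) :=
    hG.meas.comp (hp.prodMk (by fun_prop :
      Measurable fun x : ((ℕ → ℝ) × ℝ × ℝ) × (ℝ × ℝ) =>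
        (x.1.2.1 + x.2.2, max x.1.2.2 x.2.1)))
  have hmass := (mass_meas K m).comp hp
  have hr := hf.meas.comp
    (by fun_prop : Measurable fun x : ((ℕ → ℝ) × ℝ × ℝ) × (ℝ × ℝ) => x.2.1)
  exact (((by fun_prop : Measurable fun x : ((ℕ → ℝ) × ℝ × ℝ) × (ℝ × ℝ) => x.2.2).mul
    hmass).add hg).mul hr

/-- The product of reward density and total posterior mass, which dominates `homInt`. -/
lemma dominating_integrable (hf : Dens Rbar fR) (k : ℕ) (q : ℕ → ℝ) (w C : ℝ) :
    Integrable fun z : ℝ × ℝ => C * (fR z.1 * mass K m (push T k q w z.2)) :=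
  (hf.int.mul_prod (mass_push_integrable T K m k q w)).const_mul C

lemma homInt_bound (hf : Dens Rbar fR) (hG : Good T Rbar K m G) :
    ∃ C, 0 ≤ C ∧ ∀ q, (∀ n, 0 ≤ q n) → ∀ w ∈ Icc 0 T, ∀ b ∈ Icc 0 Rbar, ∀ z : ℝ × ℝ,
      |homInt T fR K m G q w b z|
        ≤ C * (fR z.1 * mass K m (push T (K - (m + 1)) q w z.2)) := by
  obtain ⟨B, hB, hbd⟩ := hG.bound
  refine ⟨|T| + B, by positivity, fun q hq w hw b hb z => ?_⟩
  have hM : 0 ≤ mass K m (push T (K - (m + 1)) q w z.2) := mass_nonneg (push_nonneg hq _ _)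
  by_cases hu : 0 ≤ z.2 ∧ z.2 ≤ T - w
  swap
  · simp [homInt, push_off hu, hG.zero, mass]
  by_cases hr : z.1 < 0 ∨ Rbar < z.1
  · simp [homInt, hf.supp _ hr]
  push Not at hr
  have h1 := hbd (push T (K - (m + 1)) q w z.2) (push_nonneg hq _ _) (w + z.2)
    ⟨by linarith [hw.1], by linarith⟩ (max b z.1) ⟨le_max_of_le_left hb.1, max_le hb.2 hr.2⟩
  unfold homInt
  rw [abs_mul, abs_of_nonneg (hf.nonneg z.1), mul_comm (fR z.1), ← mul_assoc]
  refine mul_le_mul_of_nonneg_right ?_ (hf.nonneg _)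
  refine (abs_add_le _ _).trans ?_
  rw [add_mul, abs_mul, abs_of_nonneg hM, abs_of_nonneg hu.1]
  have h2 : z.2 ≤ |T| := by linarith [le_abs_self T, hw.1]
  gcongr

lemma homInt_integrable (hf : Dens Rbar fR) (hG : Good T Rbar K m G) {q : ℕ → ℝ}
    (hq : ∀ n, 0 ≤ q n) {w b : ℝ} (hw : w ∈ Icc 0 T) (hb : b ∈ Icc 0 Rbar) :
    Integrable (homInt T fR K m G q w b) := by
  obtain ⟨C, _, h⟩ := homInt_bound hf hG
  refine (dominating_integrable hf (K - (m + 1)) q w C).mono' ?_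
    (Filter.Eventually.of_forall fun z => h q hq w hw b hb z)
  exact ((homInt_meas hf hG).comp
    (measurable_prodMk_left (x := ((q, w, b) : (ℕ → ℝ) × ℝ × ℝ)))).aestronglyMeasurable

lemma homCont_good (hf : Dens Rbar fR) (hG : Good T Rbar K m G) :
    Good T Rbar K (m + 1) (homCont T η fR K m G) where
  meas := by
    unfold homCont
    refine Measurable.add (by fun_prop) ?_
    exact ((homInt_meas hf hG).stronglyMeasurable.integral_prod_right').measurable
  homog a ha q w b := by
    unfold homCont
    have : ∀ z, homInt T fR K m G (fun n => a * q n) w b z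
        = a * homInt T fR K m G q w b z := fun z => by
      simp only [homInt, push_smul, mass_smul, hG.homog a ha]
      ring
    simp only [this, integral_const_mul]
    ring
  bound := by
    obtain ⟨C, hC, h⟩ := homInt_bound hf hG
    refine ⟨(|T| + |η| * |Rbar|) + C, by positivity, fun q hq w hw b hb => ?_⟩
    unfold homCont
    refine (abs_add_le _ _).trans ?_
    rw [add_mul]
    refine add_le_add ?_ ?_
    · rw [abs_mul, abs_of_nonneg (hq _), mul_comm]
      have h1 : |T - w - η * b| ≤ |T| + |η| * |Rbar| := by
        refine (abs_sub _ _).trans ?_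
        rw [abs_mul]
        have h2 : |T - w| ≤ |T| := by
          rw [abs_of_nonneg (by linarith [hw.2] : 0 ≤ T - w)]
          linarith [le_abs_self T, hw.1]
        have h3 : |b| ≤ |Rbar| := abs_le_abs_of_nonneg hb.1 hb.2
        gcongr
      exact mul_le_mul h1 (apply_le_mass hq) (hq _) (by positivity)
    · have h1 := norm_integral_le_of_norm_le (f := homInt T fR K m G q w b)
        (dominating_integrable (T := T) (K := K) (m := m) hf (K - (m + 1)) q w C)
        (Filter.Eventually.of_forall fun z => h q hq w hw b hb z)
      refine h1.trans ?_
      rw [integral_const_mul]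
      refine mul_le_mul_of_nonneg_left ?_ hC
      have h2 := integral_prod_mul (μ := volume) (ν := volume) fR
        (fun u => mass K m (push T (K - (m + 1)) q w u))
      refine (le_of_eq h2).trans ?_
      rw [hf.tot, one_mul]
      exact (mass_push_integral_le K m _ hq hw.2).trans (mass_le_succ hq)
  superadd p q hp hq w hw b hb := by
    have hpq : ∀ n, 0 ≤ p n + q n := fun n => add_nonneg (hp n) (hq n)
    have key : ∫ z, homInt T fR K m G p w b z + homInt T fR K m G q w b z
        ≤ ∫ z, homInt T fR K m G (fun n => p n + q n) w b z := by
      refine integral_mono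
        ((homInt_integrable hf hG hp hw hb).add (homInt_integrable hf hG hq hw hb))
        (homInt_integrable hf hG hpq hw hb) fun z => ?_
      by_cases hu : 0 ≤ z.2 ∧ z.2 ≤ T - w
      swap
      · simp [homInt, push_off hu, hG.zero, mass]
      by_cases hr : z.1 < 0 ∨ Rbar < z.1
      · simp [homInt, hf.supp _ hr]
      push Not at hr
      have h1 := hG.superadd (push T (K - (m + 1)) p w z.2) (push T (K - (m + 1)) q w z.2)
        (push_nonneg hp _ _) (push_nonneg hq _ _) (w + z.2)
        ⟨by linarith [hw.1], by linarith⟩ (max b z.1)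
        ⟨le_max_of_le_left hb.1, max_le hb.2 hr.2⟩
      simp only [homInt, push_add, mass_add]
      rw [← add_mul]
      refine mul_le_mul_of_nonneg_right ?_ (hf.nonneg _)
      linarith
    rw [integral_add (homInt_integrable hf hG hp hw hb) (homInt_integrable hf hG hq hw hb)] at key
    unfold homCont
    linarith

lemma stop_good (T Rbar η : ℝ) (K m : ℕ) :
    Good T Rbar K m (fun q _ b => -η * b * mass K m q) where
  meas := by
    have h : Measurable fun x : (ℕ → ℝ) × ℝ × ℝ => mass K m x.1 :=
      (mass_meas K m).comp measurable_fst
    exact Measurable.mul (by fun_prop) h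
  homog a _ q w b := by
    simp only [mass_smul]
    ring
  bound := by
    refine ⟨|η| * |Rbar|, by positivity, fun q hq w _ b hb => ?_⟩
    rw [abs_mul, abs_mul, abs_neg, abs_of_nonneg (mass_nonneg hq)]
    have h3 : |b| ≤ |Rbar| := abs_le_abs_of_nonneg hb.1 hb.2
    have := mass_nonneg (K := K) (m := m) hq
    gcongr
  superadd p q _ _ w _ b _ := by
    simp only [mass_add]
    linarith

lemma min_good {G' : (ℕ → ℝ) → ℝ → ℝ → ℝ} (h : Good T Rbar K m G) (h' : Good T Rbar K m G') :
    Good T Rbar K m (fun q w b => min (G q w b) (G' q w b)) where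
  meas := h.meas.min h'.meas
  homog a ha q w b := by
    simp only [h.homog a ha, h'.homog a ha]
    exact (mul_min_of_nonneg _ _ ha).symm
  bound := by
    obtain ⟨B, hB, hb⟩ := h.bound
    obtain ⟨B', hB', hb'⟩ := h'.bound
    refine ⟨max B B', le_max_of_le_left hB, fun q hq w hw b hbb => ?_⟩
    have hM := mass_nonneg (K := K) (m := m) hq
    refine abs_min_le_max_abs_abs.trans (max_le ?_ ?_)
    · exact (hb q hq w hw b hbb).trans (mul_le_mul_of_nonneg_right (le_max_left _ _) hM)
    · exact (hb' q hq w hw b hbb).trans (mul_le_mul_of_nonneg_right (le_max_right _ _) hM)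
  superadd p q hp hq w hw b hb :=
    le_min
      ((add_le_add (min_le_left _ _) (min_le_left _ _)).trans (h.superadd p q hp hq w hw b hb))
      ((add_le_add (min_le_right _ _) (min_le_right _ _)).trans (h'.superadd p q hp hq w hw b hb))

lemma homVal_good (hf : Dens Rbar fR) : ∀ m, Good T Rbar K m (homVal T η fR K m)
  | 0 => stop_good T Rbar η K 0
  | m + 1 => min_good (stop_good T Rbar η K (m + 1)) (homCont_good hf (homVal_good hf m))

/-! ### Comparison with the original recursion -/

lemma τbel_eq (hm : m + 1 ≤ K) (p : ℕ → ℝ) (w u : ℝ) :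
    τbel T K (K - (m + 1)) p w u = fun n => (mass K m (push T (K - (m + 1)) p w u))⁻¹ *
      push T (K - (m + 1)) p w u n := by
  have h : K - (m + 1) + 1 = K - m := by omega
  ext n
  simp only [τbel, mass, push, h]
  rw [div_eq_inv_mul]

/-- If `J` agrees with the homogeneous `G` on vectors of mass one, then the continuing costs
agree on every nonnegative vector, of whatever mass: only the normalised posterior enters `J`. -/
lemma contCost_eq_homCont (hR : 0 < Rbar) (hf : Dens Rbar fR) (hG : Good T Rbar K m G)
    (hm : m + 1 ≤ K)
    {J : (ℕ → ℝ) → ℝ → ℝ → ℝ}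
    (hJ : ∀ p, (∀ n, 0 ≤ p n) → mass K m p = 1 → ∀ w ∈ Icc 0 T, ∀ b ∈ Icc 0 Rbar,
      J p w b = G p w b)
    {p : ℕ → ℝ} (hp : ∀ n, 0 ≤ p n) {w b : ℝ} (hw : w ∈ Icc 0 T) (hb : b ∈ Icc 0 Rbar) :
    contCost T Rbar η fR K J (K - (m + 1)) p w b = homCont T η fR K m G p w b := by
  have hk : K - (m + 1) + 1 = K - m := by omega
  unfold contCost homCont
  rw [hk]
  generalize hkk : K - (m + 1) = k at *
  have hτ : ∀ u, τbel T K k p w u = fun n => (mass K m (push T k p w u))⁻¹ * push T k p w u n := by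
    intro u
    subst hkk
    exact τbel_eq hm p w u
  -- A coordinate with nonzero weight forces positive total mass, so that `τ` is normalised there.
  have hle : ∀ n ∈ Finset.Icc (K - m) K, ∀ u, p n * gmin (n - k) (T - w) u
      ≤ mass K m (push T k p w u) := fun n hn u =>
    Finset.single_le_sum (f := push T k p w u) (fun i _ => push_nonneg hp _ _ i) hn
  let h : ℕ → ℝ × ℝ → ℝ := fun n z =>
    p n * ((z.2 + G (τbel T K k p w z.2) (w + z.2) (max b z.1)) * gmin (n - k) (T - w) z.2 * fR z.1)
  have hτ_nonneg : ∀ u n, 0 ≤ τbel T K k p w u n := fun u n => by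
    rw [hτ]
    exact mul_nonneg (inv_nonneg.2 (mass_nonneg (push_nonneg hp _ _))) (push_nonneg hp _ _ _)
  have hτ_mass : ∀ u, 0 < mass K m (push T k p w u) → mass K m (τbel T K k p w u) = 1 := by
    intro u hu
    rw [hτ, mass_smul, inv_mul_cancel₀ hu.ne']
  have hint : ∀ n ∈ Finset.Icc (K - m) K, Integrable (h n) := by
    intro n hn
    obtain ⟨B, hB, hbd⟩ := hG.bound
    refine ((hf.int.mul_prod (gmin_integrable (n - k) (T - w))).const_mul
      (p n * (|T| + B))).mono' ?_ (Filter.Eventually.of_forall fun z => ?_)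
    · have hpush : Measurable fun u => push T k p w u :=
        (push_meas T k).comp (f := fun u : ℝ => (p, w, u)) (by fun_prop)
      have hτm : Measurable fun u => τbel T K k p w u := by
        refine measurable_pi_lambda _ fun i => ?_
        simp only [hτ]
        exact (((mass_meas K m).comp hpush).inv).mul ((measurable_pi_apply i).comp hpush)
      have hGm : Measurable fun z : ℝ × ℝ => G (τbel T K k p w z.2) (w + z.2) (max b z.1) :=
        hG.meas.comp ((hτm.comp measurable_snd).prodMk
          (by fun_prop : Measurable fun z : ℝ × ℝ => (w + z.2, max b z.1)))
      have hgm : Measurable fun z : ℝ × ℝ => gmin (n - k) (T - w) z.2 :=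
        (gmin_meas (n - k)).comp (f := fun z : ℝ × ℝ => (T - w, z.2)) (by fun_prop)
      exact ((((measurable_snd.add hGm).mul hgm).mul
        (hf.meas.comp measurable_fst)).const_mul (p n)).aestronglyMeasurable
    · by_cases hu : 0 ≤ z.2 ∧ z.2 ≤ T - w
      swap
      · simp [h, gmin_off hu]
      by_cases hr : z.1 < 0 ∨ Rbar < z.1
      · simp [h, hf.supp _ hr]
      push Not at hr
      rcases (mul_nonneg (hp n) (gmin_nonneg (n - k) (T - w) z.2)).eq_or_lt with h0 | h0
      · rcases mul_eq_zero.1 h0.symm with h0 | h0 <;> simp [h, h0]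
      have hM := h0.trans_le (hle n hn z.2)
      have h1 := hbd _ (hτ_nonneg z.2) (w + z.2)
        ⟨by linarith [hw.1], by linarith⟩ (max b z.1) ⟨le_max_of_le_left hb.1, max_le hb.2 hr.2⟩
      rw [hτ_mass _ hM, mul_one] at h1
      have h2 : |z.2 + G (τbel T K k p w z.2) (w + z.2) (max b z.1)| ≤ |T| + B := by
        refine (abs_add_le _ _).trans (add_le_add ?_ h1)
        rw [abs_of_nonneg hu.1]
        linarith [le_abs_self T, hw.1]
      simp only [h, Real.norm_eq_abs, abs_mul, abs_of_nonneg (hp n),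
        abs_of_nonneg (gmin_nonneg _ _ _), abs_of_nonneg (hf.nonneg _)]
      have h3 := mul_le_mul_of_nonneg_right h2
        (mul_nonneg (mul_nonneg (hp n) (gmin_nonneg (n - k) (T - w) z.2)) (hf.nonneg z.1))
      linarith
  have hterm : ∀ n ∈ Finset.Icc (K - m) K, p n * (∫ r in (0:ℝ)..Rbar, ∫ u in (0:ℝ)..(T - w),
      (u + J (τbel T K k p w u) (w + u) (max b r)) * gmin (n - k) (T - w) u * fR r)
      = ∫ z, h n z := by
    intro n hn
    have hi := integral_prod _ (hint n hn)
    refine Eq.trans ?_ hi.symm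
    have hin : ∀ r, (∫ u in (0:ℝ)..(T - w),
      (u + J (τbel T K k p w u) (w + u) (max b r)) * gmin (n - k) (T - w) u * fR r)
      = ∫ u, (u + J (τbel T K k p w u) (w + u) (max b r)) * gmin (n - k) (T - w) u * fR r :=
      fun r => interval_eq_full (by linarith [hw.2]) fun u hu => by simp [gmin_off hu]
    simp only [hin]
    rw [interval_eq_full hR.le fun r hr => by
      have : fR r = 0 := hf.supp r (by by_contra! hc; exact hr hc)
      simp [this], ← integral_const_mul]
    congr 1
    ext r
    rw [← integral_const_mul]
    congr 1
    ext u
    simp only [h]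
    by_cases hr : r < 0 ∨ Rbar < r
    · simp [hf.supp _ hr]
    push Not at hr
    by_cases hu : 0 ≤ u ∧ u ≤ T - w
    swap
    · simp [gmin_off hu]
    rcases (mul_nonneg (hp n) (gmin_nonneg (n - k) (T - w) u)).eq_or_lt with h0 | h0
    · rcases mul_eq_zero.1 h0.symm with h0 | h0 <;> simp [h0]
    rw [hJ _ (hτ_nonneg u) (hτ_mass u (h0.trans_le (hle n hn u))) (w + u)
        ⟨by linarith [hw.1], by linarith⟩ (max b r) ⟨le_max_of_le_left hb.1, max_le hb.2 hr.2⟩]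
  rw [Finset.sum_congr rfl hterm, ← integral_finsetSum _ hint]
  congr 2
  ext z
  by_cases hr : z.1 < 0 ∨ Rbar < z.1
  · simp [h, homInt, hf.supp _ hr]
  push Not at hr
  -- Pointwise, the terms add up to `D * (u + G τ)` with `D` the posterior mass, and homogeneity
  -- turns `D * G τ` into `G` of the unnormalised posterior.
  have hsum : ∑ n ∈ Finset.Icc (K - m) K, h n z = mass K m (push T k p w z.2)
      * (z.2 + G (τbel T K k p w z.2) (w + z.2) (max b z.1)) * fR z.1 := by
    simp only [h, mass, push, Finset.sum_mul]
    exact Finset.sum_congr rfl fun n _ => by ring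
  have hhom : mass K m (push T k p w z.2) * G (τbel T K k p w z.2) (w + z.2) (max b z.1)
      = G (push T k p w z.2) (w + z.2) (max b z.1) := by
    by_cases hu : 0 ≤ z.2 ∧ z.2 ≤ T - w
    swap
    · simp [push_off hu, hG.zero, mass]
    have hMn : 0 ≤ mass K m (push T k p w z.2) := mass_nonneg (push_nonneg hp _ _)
    rcases hMn.eq_or_lt with hM | hM
    · obtain ⟨B, _, hbd⟩ := hG.bound
      have h1 := hbd (push T k p w z.2) (push_nonneg hp w z.2) (w + z.2)
        ⟨by linarith [hw.1], by linarith⟩ (max b z.1) ⟨le_max_of_le_left hb.1, max_le hb.2 hr.2⟩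
      rw [← hM, mul_zero] at h1
      rw [← hM, zero_mul, abs_nonpos_iff.1 h1]
    · rw [hτ, hG.homog _ (inv_nonneg.2 hMn), mul_inv_cancel_left₀ hM.ne']
  rw [hsum, homInt, hkk, ← hhom]
  ring

lemma Jaux_eq_homVal (hR : 0 < Rbar) (hf : Dens Rbar fR) : ∀ m, m ≤ K →
    ∀ p, (∀ n, 0 ≤ p n) → mass K m p = 1 → ∀ w ∈ Icc 0 T, ∀ b ∈ Icc 0 Rbar,
      Jaux T Rbar η fR K m p w b = homVal T η fR K m p w b
  | 0, _, p, _, h1, w, _, b, _ => by simp [Jaux, homVal, h1]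
  | m + 1, hm, p, hp, h1, w, hw, b, hb => by
    simp only [Jaux, homVal, h1, mul_one]
    rw [contCost_eq_homCont hR hf (homVal_good hf m) hm
      (Jaux_eq_homVal hR hf m (by omega)) hp hw hb]

end Step

/-- The optimum stopping set `C_k(w,b) = {p ∈ P_k : −ηb ≤ c_k(p,w,b)}` is convex. -/
theorem stopping_set_convex (T Rbar η : ℝ) (hT : 0 < T) (hRbar : 0 < Rbar) (hη : 0 < η)
    (fR : ℝ → ℝ) (hfR_nonneg : ∀ r, 0 ≤ fR r)
    (hfR_supp : ∀ r, r < 0 ∨ Rbar < r → fR r = 0)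
    (hfR_meas : Measurable fR)
    (hfR_int : ∫ r in (0:ℝ)..Rbar, fR r = 1)
    (K : ℕ) (hK : 2 ≤ K)
    (k : ℕ) (hk1 : 1 ≤ k) (hk2 : k ≤ K - 1)
    (w b : ℝ) (hw : w ∈ Set.Ioo 0 T) (hb : b ∈ Set.Icc 0 Rbar) :
    Convex ℝ {p : ℕ → ℝ | memP K k p ∧ -η * b ≤ cCost T Rbar η fR K k p w b} := by
  have hf := dens_of hRbar hfR_nonneg hfR_supp hfR_meas hfR_int
  have hw' : w ∈ Icc 0 T := ⟨hw.1.le, hw.2.le⟩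
  obtain ⟨m, hm⟩ : ∃ m, m = K - (k + 1) := ⟨_, rfl⟩
  have hkm : k = K - (m + 1) := by omega
  have hG : Good T Rbar K m (homVal T η fR K m) := homVal_good hf m
  have hC : Good T Rbar K (m + 1) (homCont T η fR K m (homVal T η fR K m)) := homCont_good hf hG
  have hc : ∀ p, (∀ n, 0 ≤ p n) → cCost T Rbar η fR K k p w b
      = homCont T η fR K m (homVal T η fR K m) p w b := by
    intro p hp
    unfold cCost
    rw [← hm, hkm]
    exact contCost_eq_homCont hRbar hf hG (by omega)
      (Jaux_eq_homVal hRbar hf m (by omega)) hp hw' hb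
  rintro p ⟨⟨hp0, hps, hp1⟩, hpc⟩ q ⟨⟨hq0, hqs, hq1⟩, hqc⟩ a c ha hc0 hac
  have hmem : a • p + c • q = fun n => a * p n + c * q n := by
    ext n
    simp
  have hap : ∀ n, 0 ≤ a * p n := fun n => mul_nonneg ha (hp0 n)
  have hcq : ∀ n, 0 ≤ c * q n := fun n => mul_nonneg hc0 (hq0 n)
  have hnn : ∀ n, 0 ≤ a * p n + c * q n := fun n => add_nonneg (hap n) (hcq n)
  rw [hmem]
  refine ⟨⟨hnn, fun n hn => by simp [hps n hn, hqs n hn], ?_⟩, ?_⟩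
  · rw [Finset.sum_add_distrib, ← Finset.mul_sum, ← Finset.mul_sum, hp1, hq1]
    linarith
  · rw [hc _ hp0] at hpc
    rw [hc _ hq0] at hqc
    rw [hc _ hnn]
    have h1 := hC.superadd _ _ hap hcq w hw' b hb
    rw [hC.homog a ha, hC.homog c hc0] at h1
    have h2 := mul_le_mul_of_nonneg_left hpc ha
    have h3 := mul_le_mul_of_nonneg_left hqc hc0
    have h4 : a * (-η * b) + c * (-η * b) = -η * b := by rw [← add_mul, hac, one_mul]
    linarith
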